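/- The special value ζ₂(2,1,1,1,2,2; G₂) equals −(187/324)·ζ(2)·ζ(7) + (11149/11664)·ζ(9). -/

import Mathlib

/-- The zeta-function of the root system `G₂` at a tuple of natural number exponents:
`ζ₂(s₁,…,s₆;G₂) = ∑_{m,n≥1} 1/(m^{s₁} n^{s₂} (m+n)^{s₃} (m+2n)^{s₄} (m+3n)^{s₅} (2m+3n)^{s₆})`. -/
noncomputable def zetaG2 (s₁ s₂ s₃ s₄ s₅ s₆ : ℕ) : ℝ :=
  ∑' (m : ℕ+) (n : ℕ+),
    1 / (((m : ℕ) : ℝ) ^ s₁ * ((n : ℕ) : ℝ) ^ s₂ * (((m : ℕ) : ℝ) + ((n : ℕ) : ℝ)) ^ s₃ *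
      (((m : ℕ) : ℝ) + 2 * ((n : ℕ) : ℝ)) ^ s₄ * (((m : ℕ) : ℝ) + 3 * ((n : ℕ) : ℝ)) ^ s₅ *
      (2 * ((m : ℕ) : ℝ) + 3 * ((n : ℕ) : ℝ)) ^ s₆)

/-- The summand extended to all integer pairs (junk value `0` on the walls). -/
noncomputable def gF (m n : ℤ) : ℝ :=
  1 / ((m : ℝ) ^ 2 * (n : ℝ) * ((m : ℝ) + n) * ((m : ℝ) + 2 * n) * ((m : ℝ) + 3 * n) ^ 2 *
    (2 * (m : ℝ) + 3 * n) ^ 2)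

/-- Real zeta value. -/
noncomputable def zR (k : ℕ) : ℝ := ∑' n : ℕ, 1 / (n : ℝ) ^ k

lemma zR_hasSum {k : ℕ} (hk : 1 < k) : HasSum (fun n : ℕ => 1 / (n : ℝ) ^ k) (zR k) :=
  (Real.summable_one_div_nat_pow.mpr hk).hasSum

lemma zR_cast {k : ℕ} (hk : 1 < k) : ((zR k : ℝ) : ℂ) = riemannZeta k := by
  rw [zeta_nat_eq_tsum_of_gt_one hk, zR, Complex.ofReal_tsum]
  simp

lemma gF_zero_left (n : ℤ) : gF 0 n = 0 := by simp [gF]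

lemma gF_zero_right (m : ℤ) : gF m 0 = 0 := by simp [gF]

lemma gF_neg (m n : ℤ) : gF (-m) (-n) = -gF m n := by
  unfold gF
  rw [← one_div_neg_eq_neg_one_div]
  push_cast
  congr 1
  ring

lemma gF_refl (m n : ℤ) : gF m (-m - n) = -gF m n := by
  unfold gF
  rw [← one_div_neg_eq_neg_one_div]
  push_cast
  congr 1
  ring

lemma gF_tsum_right (m : ℤ) : ∑' n : ℤ, gF m n = 0 := by
  have h := (Equiv.subLeft (-m)).tsum_eq (fun n : ℤ => gF m n)
  simp only [Equiv.subLeft_apply, gF_refl, tsum_neg] at h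
  linarith

lemma int_mul_bound (m n : ℤ) (h1 : m + n ≠ 0) (h2 : m + 2 * n ≠ 0) :
    |(n : ℝ)| ≤ 2 * |((m : ℝ) + n) * ((m : ℝ) + 2 * n)| := by
  have a1 : (1 : ℝ) ≤ |(m : ℝ) + n| := by exact_mod_cast Int.one_le_abs h1
  have a2 : (1 : ℝ) ≤ |(m : ℝ) + 2 * n| := by exact_mod_cast Int.one_le_abs h2
  rw [abs_mul]
  have h3 : |(n : ℝ)| ≤ |(m : ℝ) + n| + |(m : ℝ) + 2 * n| := by
    have := abs_sub ((m : ℝ) + 2 * n) ((m : ℝ) + n)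
    rw [show (m : ℝ) + 2 * n - (m + n) = n by ring] at this
    linarith
  nlinarith [mul_nonneg (sub_nonneg.2 a1) (sub_nonneg.2 a2)]

lemma gF_bound (m n : ℤ) : ‖gF m n‖ ≤ 2 * (1 / (m : ℝ) ^ 2 * (1 / (n : ℝ) ^ 2)) := by
  by_cases h0 : m = 0
  · subst h0; simp [gF]
  by_cases h1 : n = 0
  · subst h1; simp [gF]
  have hr : (0 : ℝ) ≤ 2 * (1 / (m : ℝ) ^ 2 * (1 / (n : ℝ) ^ 2)) := by positivity
  by_cases h2 : m + n = 0
  · have : (m : ℝ) + n = 0 := by exact_mod_cast h2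
    simpa [gF, this] using hr
  by_cases h3 : m + 2 * n = 0
  · have : (m : ℝ) + 2 * n = 0 := by exact_mod_cast h3
    simpa [gF, this] using hr
  by_cases h4 : m + 3 * n = 0
  · have : (m : ℝ) + 3 * n = 0 := by exact_mod_cast h4
    simpa [gF, this] using hr
  by_cases h5 : 2 * m + 3 * n = 0
  · have : 2 * (m : ℝ) + 3 * n = 0 := by exact_mod_cast h5
    simpa [gF, this] using hr
  have b := int_mul_bound m n h2 h3
  have a0 : (0 : ℝ) < (m : ℝ) ^ 2 := by positivity
  have a1 : (0 : ℝ) < |(n : ℝ)| := by positivity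
  have a4 : (1 : ℝ) ≤ |(m : ℝ) + 3 * n| := by exact_mod_cast Int.one_le_abs h4
  have a5 : (1 : ℝ) ≤ |2 * (m : ℝ) + 3 * n| := by exact_mod_cast Int.one_le_abs h5
  have c4 : (1 : ℝ) ≤ |(m : ℝ) + 3 * n| ^ 2 := one_le_pow₀ a4
  have c5 : (1 : ℝ) ≤ |2 * (m : ℝ) + 3 * n| ^ 2 := one_le_pow₀ a5
  have key : (m : ℝ) ^ 2 * (n : ℝ) ^ 2 / 2 ≤ |(m : ℝ) ^ 2 * (n : ℝ) * ((m : ℝ) + n) *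
      ((m : ℝ) + 2 * n) * ((m : ℝ) + 3 * n) ^ 2 * (2 * (m : ℝ) + 3 * n) ^ 2| := by
    have e : |(m : ℝ) ^ 2 * (n : ℝ) * ((m : ℝ) + n) *
      ((m : ℝ) + 2 * n) * ((m : ℝ) + 3 * n) ^ 2 * (2 * (m : ℝ) + 3 * n) ^ 2| =
      (m : ℝ) ^ 2 * (|(n : ℝ)| * |((m : ℝ) + n) * ((m : ℝ) + 2 * n)|) *
        |(m : ℝ) + 3 * n| ^ 2 * |2 * (m : ℝ) + 3 * n| ^ 2 := by
      simp only [abs_mul, abs_pow, sq_abs]; ring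
    rw [e]
    calc (m : ℝ) ^ 2 * (n : ℝ) ^ 2 / 2 = (m : ℝ) ^ 2 * (|(n : ℝ)| * (|(n : ℝ)| / 2)) * 1 * 1 := by
          rw [← sq_abs (n : ℝ)]; ring
      _ ≤ _ := by gcongr; linarith
  rw [gF, norm_div, norm_one, Real.norm_eq_abs]
  calc _ ≤ 1 / ((m : ℝ) ^ 2 * (n : ℝ) ^ 2 / 2) := one_div_le_one_div_of_le (by positivity) key
    _ = _ := by field_simp

lemma gF_summable : Summable (fun p : ℤ × ℤ => gF p.1 p.2) := by
  have h : Summable (fun m : ℤ => 1 / (m : ℝ) ^ 2) := Real.summable_one_div_int_pow.2 one_lt_two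
  have h2 := (h.mul_of_nonneg h (fun m => by positivity) (fun m => by positivity)).mul_left 2
  exact Summable.of_norm_bounded h2 (fun p => gF_bound p.1 p.2)

lemma int_sq_hasSum : HasSum (fun m : ℤ => 1 / (m : ℝ) ^ 2) (2 * zR 2) := by
  have h := zR_hasSum one_lt_two
  have h' : HasSum (fun m : ℤ => 1 / (m : ℝ) ^ 2) (zR 2 + zR 2 - 1 / ((0 : ℤ) : ℝ) ^ 2) :=
    HasSum.of_nat_of_neg (by simpa using h) (by simpa using h)
  convert h' using 1
  simp; ring

lemma hasSum_conv {ι : Type*} {f g : ι → ℝ} {a b : ℝ} (h : HasSum f a) (hf : ∀ i, g i = f i)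
    (hb : b = a) : HasSum g b := by
  rw [hb, show g = f from funext hf]; exact h

lemma nat_even_hasSum {k : ℕ} (hk : 1 < k) :
    HasSum (fun n : ℕ => 1 / (((2 * n : ℕ) : ℝ)) ^ k) (1 / 2 ^ k * zR k) := by
  refine hasSum_conv ((zR_hasSum hk).mul_left (1 / 2 ^ k)) (fun n => ?_) rfl
  push_cast
  rw [mul_pow, one_div_mul_one_div]

lemma nat_odd_hasSum {k : ℕ} (hk : 1 < k) :
    HasSum (fun n : ℕ => 1 / (((2 * n + 1 : ℕ) : ℝ)) ^ k) ((1 - 1 / 2 ^ k) * zR k) := by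
  have hs : Summable (fun n : ℕ => 1 / (((2 * n + 1 : ℕ) : ℝ)) ^ k) :=
    (zR_hasSum hk).summable.comp_injective (i := fun n : ℕ => 2 * n + 1)
      (fun a b h => by simpa using h)
  have h := HasSum.even_add_odd (f := fun n : ℕ => 1 / (n : ℝ) ^ k) (nat_even_hasSum hk) hs.hasSum
  have e := h.unique (zR_hasSum hk)
  convert hs.hasSum using 1
  linarith

lemma int_odd_sq_hasSum : HasSum (fun m : ℤ => 1 / (2 * (m : ℝ) + 1) ^ 2) (3 / 2 * zR 2) := by
  have h := nat_odd_hasSum one_lt_two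
  have h' : HasSum (fun m : ℤ => 1 / (2 * (m : ℝ) + 1) ^ 2)
      ((1 - 1 / 2 ^ 2) * zR 2 + (1 - 1 / 2 ^ 2) * zR 2) := by
    apply HasSum.of_nat_of_neg_add_one
    · convert h using 2
      push_cast; rfl
    · convert h using 2
      push_cast; congr 1; ring
  convert h' using 1
  ring

lemma telescope_nat : HasSum (fun n : ℕ => 1 / (n : ℝ) - 1 / ((n : ℝ) + 1)) 0 := by
  have hs : Summable (fun n : ℕ => 1 / (n : ℝ) - 1 / ((n : ℝ) + 1)) := by
    refine Summable.of_norm_bounded ((zR_hasSum one_lt_two).summable.add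
      (summable_of_hasFiniteSupport (f := fun n : ℕ => if n = 0 then (1 : ℝ) else 0)
        ((Set.finite_singleton 0).subset (by intro x; simp)))) (fun n => ?_)
    rcases Nat.eq_zero_or_pos n with rfl | hn
    · simp
    · have hn' : (0 : ℝ) < n := by exact_mod_cast hn
      have e : 1 / (n : ℝ) - 1 / ((n : ℝ) + 1) = 1 / ((n : ℝ) * (n + 1)) := by
        field_simp
        ring
      rw [if_neg hn.ne', add_zero, e, Real.norm_eq_abs, abs_of_nonneg (by positivity)]
      apply one_div_le_one_div_of_le (by positivity)
      nlinarith
  rw [hs.hasSum_iff_tendsto_nat]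
  have e : ∀ N : ℕ, ∑ i ∈ Finset.range N, (1 / (i : ℝ) - 1 / ((i : ℝ) + 1)) = -(1 / (N : ℝ)) := by
    intro N
    induction N with
    | zero => simp
    | succ k ih => rw [Finset.sum_range_succ, ih]; push_cast; ring
  simp only [e]
  simpa using (tendsto_one_div_atTop_nhds_zero_nat (𝕜 := ℝ)).neg

lemma telescope_int : HasSum (fun m : ℤ => 1 / (m : ℝ) - 1 / ((m : ℝ) + 1)) 0 := by
  have h : HasSum (fun m : ℤ => 1 / (m : ℝ) - 1 / ((m : ℝ) + 1)) (0 + 0) := by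
    apply HasSum.of_nat_of_neg_add_one
    · simpa using telescope_nat
    · convert telescope_nat using 2 with n
      push_cast
      rw [show (-((n : ℝ) + 1) + 1) = -(n : ℝ) by ring, one_div_neg_eq_neg_one_div,
        one_div_neg_eq_neg_one_div]
      ring
  simpa using h

lemma hasSum_shift {f : ℤ → ℝ} {a : ℝ} (h : HasSum f a) (k : ℤ) :
    HasSum (fun m : ℤ => f (m + k)) a :=
  (Equiv.addRight k).hasSum_iff.2 h

lemma telescope_int_nat (k : ℕ) : HasSum (fun m : ℤ => 1 / (m : ℝ) - 1 / ((m : ℝ) + k)) 0 := by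
  induction k with
  | zero => simp
  | succ k ih =>
    have h := ih.add (hasSum_shift telescope_int k)
    rw [add_zero] at h
    convert h using 2
    push_cast
    ring

lemma pf_real (x y : ℝ) (hy : y ≠ 0) (r0 : x ≠ 0) (r1 : x + 3 * y ≠ 0) (r2 : x + y ≠ 0)
    (r3 : x + 2 * y ≠ 0) (r4 : 2 * x + 3 * y ≠ 0) :
    1 / (x ^ 2 * y * (x + y) * (x + 2 * y) * (x + 3 * y) ^ 2 * (2 * x + 3 * y) ^ 2) =
      (1 / 162 / y ^ 7) * (1 / x ^ 2) + (1 / 162 / y ^ 7) * (1 / (x + 3 * y) ^ 2)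
      + (-64 / 81 / y ^ 7) * (1 / (2 * x + 3 * y) ^ 2)
      + (-7 / 324 / y ^ 8) * (1 / x - 1 / (x + 3 * y))
      + (1 / 4 / y ^ 8) * (1 / (x + y) - 1 / (x + 2 * y)) := by
  obtain ⟨a, ha⟩ : ∃ a, a = x + 3 * y := ⟨_, rfl⟩
  obtain ⟨b, hb⟩ : ∃ b, b = x + y := ⟨_, rfl⟩
  obtain ⟨c, hc⟩ : ∃ c, c = x + 2 * y := ⟨_, rfl⟩
  obtain ⟨d, hd⟩ : ∃ d, d = 2 * x + 3 * y := ⟨_, rfl⟩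
  rw [← ha] at r1
  rw [← hb] at r2
  rw [← hc] at r3
  rw [← hd] at r4
  rw [← ha, ← hb, ← hc, ← hd]
  field_simp
  rw [ha, hb, hc, hd]
  ring

/-- Partial fraction decomposition with corrections on the walls. -/
lemma gF_pf (m : ℤ) (n : ℕ) (hn : n ≠ 0) :
    gF m n = (1 / 162 / (n : ℝ) ^ 7) * (1 / (m : ℝ) ^ 2)
      + (1 / 162 / (n : ℝ) ^ 7) * (1 / ((m : ℝ) + 3 * n) ^ 2)
      + (-64 / 81 / (n : ℝ) ^ 7) * (1 / (2 * (m : ℝ) + 3 * n) ^ 2)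
      + (-7 / 324 / (n : ℝ) ^ 8) * (1 / (m : ℝ) - 1 / ((m : ℝ) + 3 * n))
      + (1 / 4 / (n : ℝ) ^ 8) * (1 / ((m : ℝ) + n) - 1 / ((m : ℝ) + 2 * n))
      - (if m = 0 then 263 / 5832 / (n : ℝ) ^ 9 else 0)
      - (if m = -3 * n then 263 / 5832 / (n : ℝ) ^ 9 else 0)
      - (if m = -n then -1 / (n : ℝ) ^ 9 else 0)
      - (if m = -2 * n then -1 / (n : ℝ) ^ 9 else 0)
      - (if 2 * m + 3 * n = 0 then -5632 / 5832 / (n : ℝ) ^ 9 else 0) := by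
  have hN : (n : ℝ) ≠ 0 := by exact_mod_cast hn
  by_cases h0 : m = 0
  · subst h0
    have e1 : ¬ ((0 : ℤ) = -3 * n) := by omega
    have e2 : ¬ ((0 : ℤ) = -n) := by omega
    have e3 : ¬ ((0 : ℤ) = -2 * n) := by omega
    have e4 : ¬ (2 * (0 : ℤ) + 3 * n = 0) := by omega
    rw [gF_zero_left, if_pos rfl, if_neg e1, if_neg e2, if_neg e3, if_neg e4]
    simp only [Int.cast_zero, zero_add, mul_zero]
    field_simp
    norm_num
  by_cases h1 : m = -3 * n
  · subst h1
    have e2 : ¬ ((-3 * n : ℤ) = -n) := by omega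
    have e3 : ¬ ((-3 * n : ℤ) = -2 * n) := by omega
    have e4 : ¬ (2 * (-3 * n : ℤ) + 3 * n = 0) := by omega
    rw [if_neg h0, if_pos rfl, if_neg e2, if_neg e3, if_neg e4]
    unfold gF
    push_cast
    rw [show -3 * (n : ℝ) + 3 * n = 0 by ring, show -3 * (n : ℝ) + 2 * n = -n by ring,
      show -3 * (n : ℝ) + n = -2 * n by ring, show 2 * (-3 * (n : ℝ)) + 3 * n = -3 * n by ring]
    simp only [ne_eq, OfNat.ofNat_ne_zero, not_false_eq_true, zero_pow, mul_zero, zero_mul,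
      div_zero]
    field_simp
    norm_num
  by_cases h2 : m = -n
  · subst h2
    have e3 : ¬ ((-n : ℤ) = -2 * n) := by omega
    have e4 : ¬ (2 * (-n : ℤ) + 3 * n = 0) := by omega
    rw [if_neg h0, if_neg h1, if_pos rfl, if_neg e3, if_neg e4]
    unfold gF
    push_cast
    rw [show -(n : ℝ) + n = 0 by ring, show -(n : ℝ) + 2 * n = n by ring,
      show -(n : ℝ) + 3 * n = 2 * n by ring, show 2 * (-(n : ℝ)) + 3 * n = n by ring]
    simp only [mul_zero, zero_mul, div_zero]
    field_simp
    norm_num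
  by_cases h3 : m = -2 * n
  · subst h3
    have e4 : ¬ (2 * (-2 * n : ℤ) + 3 * n = 0) := by omega
    rw [if_neg h0, if_neg h1, if_neg h2, if_pos rfl, if_neg e4]
    unfold gF
    push_cast
    rw [show -2 * (n : ℝ) + n = -n by ring, show -2 * (n : ℝ) + 2 * n = 0 by ring,
      show -2 * (n : ℝ) + 3 * n = n by ring, show 2 * (-2 * (n : ℝ)) + 3 * n = -n by ring]
    simp only [mul_zero, zero_mul, div_zero]
    field_simp
    norm_num
  by_cases h4 : 2 * m + 3 * n = 0
  · rw [if_neg h0, if_neg h1, if_neg h2, if_neg h3, if_pos h4]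
    have h4' : 2 * (m : ℝ) + 3 * n = 0 := by exact_mod_cast h4
    have hm : (m : ℝ) = -3 / 2 * n := by linarith
    unfold gF
    push_cast
    rw [h4', hm]
    rw [show -3 / 2 * (n : ℝ) + n = -1 / 2 * n by ring,
      show -3 / 2 * (n : ℝ) + 2 * n = 1 / 2 * n by ring,
      show -3 / 2 * (n : ℝ) + 3 * n = 3 / 2 * n by ring]
    simp only [ne_eq, OfNat.ofNat_ne_zero, not_false_eq_true, zero_pow, mul_zero, div_zero]
    field_simp
    norm_num
  rw [if_neg h0, if_neg h1, if_neg h2, if_neg h3, if_neg h4]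
  have r0 : (m : ℝ) ≠ 0 := by exact_mod_cast h0
  have r1 : (m : ℝ) + 3 * n ≠ 0 := by
    have : m + 3 * n ≠ 0 := by omega
    exact_mod_cast this
  have r2 : (m : ℝ) + n ≠ 0 := by
    have : m + n ≠ 0 := by omega
    exact_mod_cast this
  have r3 : (m : ℝ) + 2 * n ≠ 0 := by
    have : m + 2 * n ≠ 0 := by omega
    exact_mod_cast this
  have r4 : 2 * (m : ℝ) + 3 * n ≠ 0 := by exact_mod_cast h4
  have := pf_real m n hN r0 r1 r2 r3 r4
  simp only [sub_zero]
  rw [← this]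
  unfold gF
  push_cast
  rfl

lemma hasSum_ite_pt (a : ℤ) (c : ℝ) : HasSum (fun m : ℤ => if m = a then c else 0) c :=
  hasSum_ite_eq a c

lemma gF_hasSum_left (n : ℕ) (hn : n ≠ 0) {s t : ℝ}
    (hs : HasSum (fun m : ℤ => 1 / (2 * (m : ℝ) + 3 * n) ^ 2) s)
    (ht : HasSum (fun m : ℤ =>
      if 2 * m + 3 * (n : ℤ) = 0 then -5632 / 5832 / (n : ℝ) ^ 9 else 0) t) :
    HasSum (fun m : ℤ => gF m n)
      (2 / 81 / (n : ℝ) ^ 7 * zR 2 - 64 / 81 / (n : ℝ) ^ 7 * s + 5569 / 2916 / (n : ℝ) ^ 9 - t) := by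
  have h1 := int_sq_hasSum.mul_left (1 / 162 / (n : ℝ) ^ 7)
  have h2 := (hasSum_shift int_sq_hasSum (3 * n)).mul_left (1 / 162 / (n : ℝ) ^ 7)
  have h3 := hs.mul_left (-64 / 81 / (n : ℝ) ^ 7)
  have h4 := (telescope_int_nat (3 * n)).mul_left (-7 / 324 / (n : ℝ) ^ 8)
  have h5 := (hasSum_shift (telescope_int_nat n) n).mul_left (1 / 4 / (n : ℝ) ^ 8)
  have H := (((((((((h1.add h2).add h3).add h4).add h5).sub
    (hasSum_ite_pt 0 (263 / 5832 / (n : ℝ) ^ 9))).sub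
    (hasSum_ite_pt (-3 * n) (263 / 5832 / (n : ℝ) ^ 9))).sub
    (hasSum_ite_pt (-n) (-1 / (n : ℝ) ^ 9))).sub
    (hasSum_ite_pt (-2 * n) (-1 / (n : ℝ) ^ 9))).sub ht)
  refine hasSum_conv H (fun m => ?_) ?_
  · rw [gF_pf m n hn]
    push_cast
    rw [show (m : ℝ) + n + n = m + 2 * n by ring]
  · ring

lemma gF_tsum_even (k : ℕ) :
    ∑' m : ℤ, gF m ((2 * k : ℕ) : ℤ) = -30 / 81 * zR 2 * (1 / ((2 * k : ℕ) : ℝ) ^ 7)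
      + 8385 / 2916 * (1 / ((2 * k : ℕ) : ℝ) ^ 9) := by
  rcases Nat.eq_zero_or_pos k with rfl | hk
  · simp [gF_zero_right]
  have hs : HasSum (fun m : ℤ => 1 / (2 * (m : ℝ) + 3 * ((2 * k : ℕ) : ℝ)) ^ 2) (zR 2 / 2) := by
    refine hasSum_conv ((hasSum_shift int_sq_hasSum (3 * k)).mul_left (1 / 4)) (fun m => ?_) ?_
    · push_cast
      rw [show 2 * (m : ℝ) + 3 * (2 * k) = 2 * (m + 3 * k) by ring, mul_pow, ← one_div_mul_one_div]
      norm_num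
    · ring
  have ht : HasSum (fun m : ℤ => if 2 * m + 3 * ((2 * k : ℕ) : ℤ) = 0 then
      -5632 / 5832 / ((2 * k : ℕ) : ℝ) ^ 9 else 0) (-5632 / 5832 / ((2 * k : ℕ) : ℝ) ^ 9) := by
    convert hasSum_ite_pt (-3 * k) (-5632 / 5832 / ((2 * k : ℕ) : ℝ) ^ 9) using 3 with m
    push_cast
    omega
  rw [(gF_hasSum_left (2 * k) (by omega) hs ht).tsum_eq]
  ring

lemma gF_tsum_odd (k : ℕ) :
    ∑' m : ℤ, gF m ((2 * k + 1 : ℕ) : ℤ) = -94 / 81 * zR 2 * (1 / ((2 * k + 1 : ℕ) : ℝ) ^ 7)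
      + 5569 / 2916 * (1 / ((2 * k + 1 : ℕ) : ℝ) ^ 9) := by
  have hs : HasSum (fun m : ℤ => 1 / (2 * (m : ℝ) + 3 * ((2 * k + 1 : ℕ) : ℝ)) ^ 2)
      (3 / 2 * zR 2) := by
    convert hasSum_shift int_odd_sq_hasSum (3 * k + 1) using 1
    funext m
    push_cast
    congr 2
    ring
  have ht : HasSum (fun m : ℤ => if 2 * m + 3 * ((2 * k + 1 : ℕ) : ℤ) = 0 then
      -5632 / 5832 / ((2 * k + 1 : ℕ) : ℝ) ^ 9 else 0) 0 := by
    convert hasSum_zero using 2 with m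
    rw [if_neg]
    push_cast
    omega
  rw [(gF_hasSum_left (2 * k + 1) (by omega) hs ht).tsum_eq]
  ring

lemma gF_half_plane : ∑' n : ℕ, ∑' m : ℤ, gF m n =
    -187 / 162 * zR 2 * zR 7 + 11149 / 5832 * zR 9 := by
  have he := ((nat_even_hasSum (k := 7) (by norm_num)).mul_left (-30 / 81 * zR 2)).add
    ((nat_even_hasSum (k := 9) (by norm_num)).mul_left (8385 / 2916))
  have ho := ((nat_odd_hasSum (k := 7) (by norm_num)).mul_left (-94 / 81 * zR 2)).add
    ((nat_odd_hasSum (k := 9) (by norm_num)).mul_left (5569 / 2916))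
  simp only [← gF_tsum_even] at he
  simp only [← gF_tsum_odd] at ho
  have h := HasSum.even_add_odd (f := fun n : ℕ => ∑' m : ℤ, gF m n) he ho
  rw [h.tsum_eq]
  ring

lemma gF_summable_nat (a b : ℤ) (ha : a ≠ 0) (hb : b ≠ 0) :
    Summable (fun p : ℕ × ℕ => gF (a * p.1) (b * p.2)) := by
  refine gF_summable.comp_injective (i := fun p : ℕ × ℕ => (a * (p.1 : ℤ), b * (p.2 : ℤ))) ?_
  rintro ⟨x, y⟩ ⟨z, w⟩ h
  simpa [ha, hb] using h

lemma gF_quadrant : 2 * ∑' m : ℕ, ∑' n : ℕ, gF m n =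
    -187 / 162 * zR 2 * zR 7 + 11149 / 5832 * zR 9 := by
  have s1 : Summable (fun p : ℕ × ℕ => gF p.1 p.2) := by
    simpa using gF_summable_nat 1 1 (by norm_num) (by norm_num)
  have s2 : Summable (fun p : ℕ × ℕ => gF p.1 (-p.2)) := by
    simpa using gF_summable_nat 1 (-1) (by norm_num) (by norm_num)
  have s3 : Summable (fun p : ℕ × ℕ => gF (-p.2) p.1) := by
    simpa [gF_neg] using (gF_summable_nat (-1) 1 (by norm_num) (by norm_num)).prod_symm
  have eA : ∀ m : ℕ, ∑' n : ℕ, gF m n + ∑' n : ℕ, gF m (-n) = 0 := by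
    intro m
    have := Summable.tsum_of_nat_of_neg (f := fun n : ℤ => gF m n) (s1.prod_factor m)
      (s2.prod_factor m)
    simp only [gF_tsum_right, gF_zero_right] at this
    linarith
  have eB : ∀ n : ℕ, ∑' m : ℤ, gF m n = ∑' m : ℕ, gF m n + ∑' m : ℕ, gF (-m) n := by
    intro n
    have := Summable.tsum_of_nat_of_neg (f := fun m : ℤ => gF m n) (s1.prod_symm.prod_factor n)
      (s3.prod_factor n)
    simp only [gF_zero_left] at this
    linarith
  have hA : ∑' m : ℕ, ∑' n : ℕ, gF m n + ∑' m : ℕ, ∑' n : ℕ, gF m (-n) = 0 := by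
    rw [← Summable.tsum_add s1.prod s2.prod]
    simp [eA]
  have hB : ∑' m : ℕ, ∑' n : ℕ, gF m n - ∑' m : ℕ, ∑' n : ℕ, gF m (-n) =
      -187 / 162 * zR 2 * zR 7 + 11149 / 5832 * zR 9 := by
    rw [← gF_half_plane]
    simp only [eB]
    have p1 : Summable (fun n : ℕ => ∑' m : ℕ, gF m n) := s1.prod_symm.prod
    have p2 : Summable (fun n : ℕ => ∑' m : ℕ, gF (-m) n) := s3.prod
    rw [Summable.tsum_add p1 p2]
    have c1 : ∑' n : ℕ, ∑' m : ℕ, gF m n = ∑' m : ℕ, ∑' n : ℕ, gF m n :=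
      Summable.tsum_comm s1
    have c2 : ∑' n : ℕ, ∑' m : ℕ, gF (-m) n = ∑' m : ℕ, ∑' n : ℕ, gF (-m) n :=
      (Summable.tsum_comm s3).symm
    have c3 : ∀ m n : ℕ, gF (-m) n = -gF m (-n) := by
      intro m n
      rw [← gF_neg, neg_neg]
    rw [c1, c2]
    simp only [c3, tsum_neg]
    ring
  linarith

lemma zetaG2_eq : zetaG2 2 1 1 1 2 2 = ∑' m : ℕ, ∑' n : ℕ, gF m n := by
  have h : ∀ m : ℕ, ∑' n : ℕ+, gF m (n : ℕ) = ∑' n : ℕ, gF m n := fun m =>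
    tsum_pnat_eq_tsum_of_eq_zero (f := fun n : ℕ => gF m n) (gF_zero_right m)
  have h' : ∑' m : ℕ+, ∑' n : ℕ, gF (m : ℕ) n = ∑' m : ℕ, ∑' n : ℕ, gF m n :=
    tsum_pnat_eq_tsum_of_eq_zero (f := fun m : ℕ => ∑' n : ℕ, gF m n) (by simp [gF_zero_left])
  rw [← h']
  simp only [← h]
  unfold zetaG2 gF
  simp

theorem zetaG2_211122 :
    (zetaG2 2 1 1 1 2 2 : ℂ) =
      -(187 / 324) * riemannZeta 2 * riemannZeta 7 + (11149 / 11664) * riemannZeta 9 := by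
  have h : zetaG2 2 1 1 1 2 2 = -(187 / 324) * zR 2 * zR 7 + (11149 / 11664) * zR 9 := by
    have := gF_quadrant
    rw [zetaG2_eq]
    linarith
  have h2 := zR_cast (k := 2) (by norm_num)
  have h7 := zR_cast (k := 7) (by norm_num)
  have h9 := zR_cast (k := 9) (by norm_num)
  push_cast at h2 h7 h9
  rw [h, ← h2, ← h7, ← h9]
  push_cast
  ring
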